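/- Let K > 0 and J ∈ ℝ, and assume φ_{K,J} attains its minimum over [−1,1] at exactly two points m₀ ≠ m₁ in (−1,1), each with φ_{K,J}''(m_i) > 0 (i.e., (K,J) lies on the coexistence curve γ). For i = 0,1, let A_i be an open neighborhood of m_i in (−1,1) whose closure does not contain m_{1−i}, and set W_n^{(i)} = (S_n − n·m_i)/√(n/φ_{K,J}''(m_i)). Then for i = 0,1 there exist constants c_i > 0 and C_i > 0 such that for all n ≥ 1 and all x with 0 ≤ x ≤ c_i·n^{1/6}: | P_{n,K,J}(W_n^{(i)} > x | m_n ∈ A_i) / P(Z > x) − 1 | ≤ C_i·(1 + x³)/√n, where Z is a standard normal random variable and the conditional probability is with respect to P_{n,K,J}. -/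

import Mathlib

open MeasureTheory ProbabilityTheory Real Filter

noncomputable section

/-- The spin value `±1` associated with a Boolean. -/
def spin (b : Bool) : ℝ := if b then 1 else -1

/-- Total magnetization `S_n(x) = ∑ i, x_i`. -/
def totalMag (n : ℕ) (x : Fin n → Bool) : ℝ := ∑ i, spin (x i)

/-- Magnetization per particle `m_n(x) = S_n(x)/n`. -/
def magPP (n : ℕ) (x : Fin n → Bool) : ℝ := totalMag n x / n

/-- Boltzmann–Gibbs weight of a configuration in the cubic Curie–Weiss model
(the reference factor `2^{-n}` is constant and cancels upon normalization). -/
def cubicWeight (n : ℕ) (K J : ℝ) (x : Fin n → Bool) : ℝ :=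
  Real.exp (n * (K / 3 * (magPP n x) ^ 3 + J / 2 * (magPP n x) ^ 2))

/-- The cubic Curie–Weiss Boltzmann–Gibbs probability measure `P_{n,K,J}`. -/
def cubicMeasure (n : ℕ) (K J : ℝ) : Measure (Fin n → Bool) :=
  (∑ x : Fin n → Bool, ENNReal.ofReal (cubicWeight n K J x))⁻¹ •
    ∑ x : Fin n → Bool, ENNReal.ofReal (cubicWeight n K J x) • Measure.dirac x

/-- The probability of an event under `P_{n,K,J}`, as a real number. -/
def cubicProb (n : ℕ) (K J : ℝ) (s : Set (Fin n → Bool)) : ℝ :=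
  (cubicMeasure n K J s).toReal

/-- The binary relative entropy `I(m)`. -/
def binEnt (m : ℝ) : ℝ :=
  (1 - m) / 2 * Real.log ((1 - m) / 2) + (1 + m) / 2 * Real.log ((1 + m) / 2)

/-- The function `φ_{K,J}(x) = I(x) − (K/3)x³ − (J/2)x²`. -/
def phiKJ (K J : ℝ) (x : ℝ) : ℝ := binEnt x - K / 3 * x ^ 3 - J / 2 * x ^ 2

/-- The standard normal cumulative distribution function. -/
def stdNormalCDF (z : ℝ) : ℝ :=
  (ProbabilityTheory.gaussianReal 0 1 (Set.Iic z)).toReal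

end

/-!
Summing over all configurations with a given magnetization turns the conditional probability into a
quotient of sums over the values `w` of `W_n`, a lattice of spacing `2 √φ''(m) / √n`. Near `m`,
Stirling's formula and the second order Taylor expansion of `φ` give the normalized weights the form
`exp (-w² / 2 + O((1 + |w|³) / √n))`. Away from `m` but inside `closure A`, strict minimality makes
both the weights and the Gaussian density exponentially small in `n`.

A *relative* estimate for the tail beyond `x` requires an additive error which is small compared
with `P(Z > x)`. It is therefore measured by the exponential profile
`exp (-x² / 2 - (1 + x) (|w| - x))`, whose integral over `|w| > x` is `exp (-x² / 2) / (1 + x)`, of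
the order of the Gaussian tail. For `x = O(n^(1/6))` the factors `exp (O(|w|³ / √n))` are absorbed
by it, with error constant of order `(1 + x³) / √n`. Comparing monotone sums with integrals then
costs at most one lattice step.
-/

open scoped Topology

section RiemannSums

open Set

variable {f : ℝ → ℝ} {a b : ℝ}

lemma sub_mul_le_setIntegral_Ioi_of_antitoneOn (hab : a ≤ b) (hf : AntitoneOn f (Ici a))
    (hint : IntegrableOn f (Ioi a)) (hf0 : ∀ u ∈ Ioi a, 0 ≤ f u) :
    (b - a) * f b ≤ ∫ u in Ioi a, f u := by
  calc (b - a) * f b = ∫ _ in Ioc a b, f b := by simp [hab]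
    _ ≤ ∫ u in Ioc a b, f u :=
        setIntegral_mono_on (integrableOn_const measure_Ioc_lt_top.ne)
          (hint.mono_set Ioc_subset_Ioi_self) measurableSet_Ioc
          fun u hu => hf hu.1.le (mem_Ici.mpr hab) hu.2
    _ ≤ ∫ u in Ioi a, f u :=
        setIntegral_mono_set hint (ae_restrict_of_forall_mem measurableSet_Ioi hf0)
          Ioc_subset_Ioi_self.eventuallyLE

lemma setIntegral_Ioi_le_add_of_antitoneOn (hab : a ≤ b) (hf : AntitoneOn f (Ici a))
    (hint : IntegrableOn f (Ioi a)) :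
    ∫ u in Ioi a, f u ≤ (b - a) * f a + ∫ u in Ioi b, f u := by
  have hIoc : IntegrableOn f (Ioc a b) := hint.mono_set Ioc_subset_Ioi_self
  rw [← Ioc_union_Ioi_eq_Ioi hab, setIntegral_union (Ioc_disjoint_Ioi le_rfl) measurableSet_Ioi
    hIoc (hint.mono_set (Ioi_subset_Ioi hab))]
  gcongr
  calc ∫ u in Ioc a b, f u ≤ ∫ _ in Ioc a b, f a :=
        setIntegral_mono_on hIoc (integrableOn_const measure_Ioc_lt_top.ne) measurableSet_Ioc
          fun u hu => hf self_mem_Ici hu.1.le hu.1.le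
    _ = (b - a) * f a := by simp [hab]

lemma integrableOn_Ioi_comp_add_mul {h : ℝ} (hh : 0 < h) (hint : IntegrableOn f (Ioi b)) :
    IntegrableOn (fun u => f (b + h * u)) (Ioi 0) := by
  rw [integrableOn_Ioi_comp_mul_left_iff (fun v => f (b + v)) 0 hh, mul_zero]
  have := (measurePreserving_add_left volume b).integrableOn_comp_preimage
    (measurableEmbedding_addLeft b) (f := f) (s := Ioi b)
  simpa [Function.comp_def] using this.mpr hint

lemma mul_setIntegral_Ioi_comp_add_mul (f : ℝ → ℝ) (b : ℝ) {h : ℝ} (hh : 0 < h) :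
    h * ∫ u in Ioi 0, f (b + h * u) = ∫ u in Ioi b, f u := by
  have := (measurePreserving_add_left volume b).setIntegral_preimage_emb
    (measurableEmbedding_addLeft b) f (Ioi b)
  rw [integral_comp_mul_left_Ioi (fun v => f (b + v)) 0 hh, mul_zero, smul_eq_mul,
    mul_inv_cancel_left₀ hh.ne', ← this]
  simp

variable {h : ℝ}

lemma summable_and_abs_mul_tsum_sub_setIntegral_Ioi_le (hh : 0 < h) (hab : a ≤ b) (hbh : b ≤ a + h)
    (hf : AntitoneOn f (Ici a)) (hint : IntegrableOn f (Ioi a)) (hf0 : ∀ u ∈ Ioi a, 0 ≤ f u) :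
    (Summable fun j : ℕ => f (b + h * j)) ∧
      |h * ∑' j : ℕ, f (b + h * j) - ∫ u in Ioi a, f u| ≤ h * f a := by
  have hintb : IntegrableOn f (Ioi b) := hint.mono_set (Ioi_subset_Ioi hab)
  have hanti : AntitoneOn (fun u => f (b + h * u)) (Ici 0) := fun u hu v hv huv =>
    hf (mem_Ici.mpr (by nlinarith [mem_Ici.mp hu])) (mem_Ici.mpr (by nlinarith [mem_Ici.mp hv]))
      (by gcongr)
  have hnonneg : ∀ u ∈ Ioi (0 : ℝ), 0 ≤ f (b + h * u) := fun u hu =>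
    hf0 _ (mem_Ioi.mpr (by nlinarith [mem_Ioi.mp hu]))
  have hint0 := integrableOn_Ioi_comp_add_mul hh hintb
  have hsum : Summable fun j : ℕ => f (b + h * j) :=
    hanti.summable_of_integrableOn_Ioi_zero hint0 hnonneg
  refine ⟨hsum, abs_le.mpr ⟨?_, ?_⟩⟩
  · have hlow := mul_le_mul_of_nonneg_left (hanti.integral_le_tsum hsum hnonneg) hh.le
    rw [mul_setIntegral_Ioi_comp_add_mul f b hh] at hlow
    have hfa : 0 ≤ f a :=
      (hf0 (a + 1) (by simp)).trans (hf self_mem_Ici (by simp) (by simp))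
    have hstart : (b - a) * f a ≤ h * f a := by gcongr; linarith
    linarith [setIntegral_Ioi_le_add_of_antitoneOn hab hf hint]
  · have hup := mul_le_mul_of_nonneg_left (hanti.tsum_le_integral hint0 hnonneg) hh.le
    rw [mul_add, mul_setIntegral_Ioi_comp_add_mul f b hh, mul_zero, add_zero] at hup
    have hfb : h * f b ≤ h * f a := by gcongr; exact hf self_mem_Ici hab hab
    have hmono : ∫ u in Ioi b, f u ≤ ∫ u in Ioi a, f u :=
      setIntegral_mono_set hint (ae_restrict_of_forall_mem measurableSet_Ioi hf0)
        (Ioi_subset_Ioi hab).eventuallyLE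
    linarith

end RiemannSums

section GaussianTail

open Set

/-- The unnormalised Gaussian tail `∫ₓ^∞ exp(-u²/2) du`. -/
noncomputable def gaussTail (x : ℝ) : ℝ := ∫ u in Ioi x, exp (-u ^ 2 / 2)

lemma integrable_exp_neg_sq_div_two : Integrable fun u : ℝ => exp (-u ^ 2 / 2) := by
  simpa [neg_div, div_eq_inv_mul] using integrable_exp_neg_mul_sq (b := 1 / 2) (by norm_num)

lemma antitoneOn_exp_neg_sq_div_two : AntitoneOn (fun u : ℝ => exp (-u ^ 2 / 2)) (Ici 0) :=
  fun u hu v _ huv => by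
    have := pow_le_pow_left₀ (mem_Ici.mp hu) huv 2
    exact exp_le_exp.mpr (by linarith)

lemma gaussTail_pos (x : ℝ) : 0 < gaussTail x :=
  have : NeZero (volume.restrict (Ioi x)) := ⟨by simp⟩
  integral_exp_pos integrable_exp_neg_sq_div_two.integrableOn

lemma gaussTail_zero : gaussTail 0 = √(2 * π) / 2 := by
  have h := integral_gaussian_Ioi (1 / 2)
  rw [show π / (1 / 2) = 2 * π by ring] at h
  simpa [gaussTail, neg_div, div_eq_inv_mul] using h

lemma toReal_gaussianReal_Ioi (x : ℝ) :
    (gaussianReal 0 1 (Ioi x)).toReal = gaussTail x / √(2 * π) := by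
  rw [gaussianReal_apply_eq_integral 0 one_ne_zero, ENNReal.toReal_ofReal
    (integral_nonneg fun _ => gaussianPDFReal_nonneg _ _ _), gaussTail, div_eq_inv_mul,
    ← integral_const_mul]
  simp [gaussianPDFReal_def]

/-- A lower bound of Mills-ratio type, from the mass of `[x, x + 1/(1+x)]` alone. -/
lemma exp_neg_sq_div_two_le_gaussTail {x : ℝ} (hx : 0 ≤ x) :
    exp (-x ^ 2 / 2) ≤ exp 2 * (1 + x) * gaussTail x := by
  have hwidth : 0 < 1 / (1 + x) := by positivity
  have hmass := sub_mul_le_setIntegral_Ioi_of_antitoneOn (b := x + 1 / (1 + x)) (by linarith)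
    (antitoneOn_exp_neg_sq_div_two.mono (Ici_subset_Ici.mpr hx))
    integrable_exp_neg_sq_div_two.integrableOn fun u _ => (exp_pos _).le
  have hdrop : exp (-x ^ 2 / 2) ≤ exp 2 * exp (-(x + 1 / (1 + x)) ^ 2 / 2) := by
    rw [← exp_add, exp_le_exp]
    have hmul : x * (1 / (1 + x)) ≤ 1 := by rw [mul_one_div, div_le_one (by positivity)]; linarith
    have hone : 1 / (1 + x) ≤ 1 := by rw [div_le_one (by positivity)]; linarith
    nlinarith
  calc exp (-x ^ 2 / 2) ≤ exp 2 * exp (-(x + 1 / (1 + x)) ^ 2 / 2) := hdrop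
    _ = exp 2 * (1 + x) * ((x + 1 / (1 + x) - x) * exp (-(x + 1 / (1 + x)) ^ 2 / 2)) := by
        rw [add_sub_cancel_left]; field_simp
    _ ≤ exp 2 * (1 + x) * gaussTail x := by gcongr; exact hmass

end GaussianTail

section LatticeSums

open Set

/-- The exponential function agreeing with the Gaussian `exp(-w²/2)` at `w = x` and decaying at
rate `1 + x`. It dominates pointwise errors beyond `x`, and its mass there is comparable to
`gaussTail x`. -/
noncomputable def expMajorant (x w : ℝ) : ℝ := exp (-x ^ 2 / 2 - (1 + x) * (w - x))

lemma expMajorant_self (x : ℝ) : expMajorant x x = exp (-x ^ 2 / 2) := by simp [expMajorant]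

lemma expMajorant_pos (x w : ℝ) : 0 < expMajorant x w := exp_pos _

lemma antitone_expMajorant {x : ℝ} (hx : 0 ≤ x) : Antitone (expMajorant x) := fun _ _ huv =>
  exp_le_exp.mpr (by gcongr)

lemma expMajorant_eq_mul (x : ℝ) :
    expMajorant x = fun w => exp (-x ^ 2 / 2 + (1 + x) * x) * exp (-(1 + x) * w) := by
  ext w
  rw [expMajorant, ← exp_add]
  ring_nf

lemma integrableOn_expMajorant {x : ℝ} (hx : 0 ≤ x) : IntegrableOn (expMajorant x) (Ioi x) := by
  rw [expMajorant_eq_mul]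
  exact (integrableOn_exp_mul_Ioi (by linarith) x).const_mul _

lemma setIntegral_Ioi_expMajorant {x : ℝ} (hx : 0 ≤ x) :
    ∫ w in Ioi x, expMajorant x w = exp (-x ^ 2 / 2) / (1 + x) := by
  rw [expMajorant_eq_mul, integral_const_mul, integral_exp_mul_Ioi (by linarith), neg_div_neg_eq,
    mul_div_assoc', ← exp_add]
  ring_nf

/-- The sequence `a` on the lattice `w₀ + hℤ` approximates the Gaussian `exp(-w²/2)` outside
`(-x, x)`, up to `E` times the exponential majorant. -/
def IsNearGaussian (w₀ h x E : ℝ) (a : ℤ → ℝ) : Prop :=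
  ∀ k : ℤ, x ≤ |w₀ + h * k| →
    |a k - exp (-(w₀ + h * k) ^ 2 / 2)| ≤ E * expMajorant x |w₀ + h * k|

variable {w₀ h x E : ℝ}

lemma summable_and_abs_mul_tsum_nat_sub_gaussTail_le (hx : 0 ≤ x) (hh : 0 < h)
    (hhx : h * (1 + x) ≤ 1) (hxw : x ≤ w₀) (hwh : w₀ ≤ x + h) {a : ℕ → ℝ}
    (ha : ∀ j : ℕ, |a j - exp (-(w₀ + h * j) ^ 2 / 2)| ≤ E * expMajorant x (w₀ + h * j)) :
    Summable a ∧
      |h * ∑' j, a j - gaussTail x| ≤ exp 2 * (h * (1 + x) + 2 * E) * gaussTail x := by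
  have hE : 0 ≤ E := nonneg_of_mul_nonneg_left ((abs_nonneg _).trans (ha 0)) (expMajorant_pos _ _)
  obtain ⟨hgs, hg⟩ := summable_and_abs_mul_tsum_sub_setIntegral_Ioi_le hh hxw hwh
    (antitoneOn_exp_neg_sq_div_two.mono (Ici_subset_Ici.mpr hx))
    integrable_exp_neg_sq_div_two.integrableOn fun _ _ => (exp_pos _).le
  obtain ⟨hes, he⟩ := summable_and_abs_mul_tsum_sub_setIntegral_Ioi_le hh hxw hwh
    ((antitone_expMajorant hx).antitoneOn _) (integrableOn_expMajorant hx)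
    fun _ _ => (expMajorant_pos _ _).le
  have hdiff : Summable fun j : ℕ => a j - exp (-(w₀ + h * j) ^ 2 / 2) :=
    .of_norm_bounded (hes.mul_left E) ha
  have has : Summable a := by simpa using hdiff.add hgs
  refine ⟨has, ?_⟩
  have herr : |∑' j, a j - ∑' j : ℕ, exp (-(w₀ + h * j) ^ 2 / 2)| ≤
      E * ∑' j : ℕ, expMajorant x (w₀ + h * j) := by
    rw [← has.tsum_sub hgs, ← tsum_mul_left]
    exact tsum_of_norm_bounded (f := fun j => a j - _) (hes.mul_left E).hasSum ha
  rw [setIntegral_Ioi_expMajorant hx, expMajorant_self] at he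
  set G := ∑' j : ℕ, exp (-(w₀ + h * j) ^ 2 / 2)
  set M := ∑' j : ℕ, expMajorant x (w₀ + h * j)
  have hM : h * M ≤ 2 * (exp (-x ^ 2 / 2) / (1 + x)) := by
    have : h * exp (-x ^ 2 / 2) ≤ exp (-x ^ 2 / 2) / (1 + x) := by
      rw [le_div_iff₀ (by positivity), mul_right_comm]
      exact mul_le_of_le_one_left (exp_pos _).le hhx
    linarith [(abs_le.mp he).2]
  calc |h * ∑' j, a j - gaussTail x|
      = |h * (∑' j, a j - G) + (h * G - gaussTail x)| := by ring_nf
    _ ≤ h * |∑' j, a j - G| + |h * G - gaussTail x| := by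
        simpa only [abs_mul, abs_of_pos hh] using abs_add_le (h * (∑' j, a j - G)) _
    _ ≤ h * (E * M) + h * exp (-x ^ 2 / 2) := by gcongr; exact hg
    _ = E * (h * M) + h * exp (-x ^ 2 / 2) := by ring
    _ ≤ E * (2 * (exp (-x ^ 2 / 2) / (1 + x))) + h * exp (-x ^ 2 / 2) := by gcongr
    _ = (h * (1 + x) + 2 * E) / (1 + x) * exp (-x ^ 2 / 2) := by field_simp; ring
    _ ≤ (h * (1 + x) + 2 * E) / (1 + x) * (exp 2 * (1 + x) * gaussTail x) := by
        gcongr; exact exp_neg_sq_div_two_le_gaussTail hx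
    _ = exp 2 * (h * (1 + x) + 2 * E) * gaussTail x := by field_simp

lemma exists_first_lattice_point_gt (w₀ x : ℝ) (hh : 0 < h) :
    ∃ k₀ : ℤ, (∀ k : ℤ, x < w₀ + h * k ↔ k₀ ≤ k) ∧ w₀ + h * k₀ ≤ x + h := by
  refine ⟨⌊(x - w₀) / h⌋ + 1, fun k => ?_, ?_⟩
  · rw [Int.add_one_le_iff, Int.floor_lt, div_lt_iff₀ hh]
    constructor <;> intro <;> linarith
  · have := (le_div_iff₀ hh).mp (Int.floor_le ((x - w₀) / h))
    push_cast
    linarith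

lemma abs_mul_tsum_indicator_sub_gaussTail_le (hx : 0 ≤ x) (hh : 0 < h) (hhx : h * (1 + x) ≤ 1)
    {a : ℤ → ℝ} (ha : IsNearGaussian w₀ h x E a) :
    |h * ∑' k, {k : ℤ | x < w₀ + h * k}.indicator a k - gaussTail x| ≤
      exp 2 * (h * (1 + x) + 2 * E) * gaussTail x := by
  obtain ⟨k₀, hk₀, hk₀h⟩ := exists_first_lattice_point_gt w₀ x hh
  have hlt := (hk₀ k₀).mpr le_rfl
  have htail : ∑' k, {k : ℤ | x < w₀ + h * k}.indicator a k = ∑' j : ℕ, a (k₀ + j) := by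
    have hinj : Function.Injective fun j : ℕ => k₀ + (j : ℤ) := fun i j hij => by simpa using hij
    rw [show {k : ℤ | x < w₀ + h * k} = Ici k₀ from Set.ext hk₀, ← hinj.tsum_eq fun k hk => ?_]
    · exact tsum_congr fun j => indicator_of_mem (by simp) a
    · obtain ⟨j, rfl⟩ := Int.le.dest (mem_Ici.mp (mem_of_indicator_ne_zero hk))
      exact ⟨j, rfl⟩
  rw [htail]
  refine (summable_and_abs_mul_tsum_nat_sub_gaussTail_le hx hh hhx hlt.le hk₀h fun j => ?_).2
  have hpos : x ≤ w₀ + h * (k₀ + j : ℤ) := ((hk₀ (k₀ + j)).mpr (by simp)).le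
  have hcast : w₀ + h * k₀ + h * j = w₀ + h * (k₀ + j : ℤ) := by push_cast; ring
  simpa only [hcast, abs_of_nonneg (hx.trans hpos)] using ha (k₀ + j) (hpos.trans (le_abs_self _))

lemma abs_mul_tsum_sub_sqrt_two_pi_le (hh : 0 < h) (hh1 : h ≤ 1) {a : ℤ → ℝ}
    (ha : IsNearGaussian w₀ h 0 E a) :
    |h * ∑' k, a k - √(2 * π)| ≤ exp 2 * (h + 2 * E) * √(2 * π) := by
  obtain ⟨k₀, hk₀, hk₀h⟩ := exists_first_lattice_point_gt w₀ 0 hh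
  have hright := (hk₀ k₀).mpr le_rfl
  have hleft : w₀ + h * (k₀ - 1 : ℤ) ≤ 0 := not_lt.mp fun hc => by have := (hk₀ _).mp hc; omega
  push_cast at hleft
  obtain ⟨hs₁, hb₁⟩ := summable_and_abs_mul_tsum_nat_sub_gaussTail_le (E := E)
    (a := fun j => a (k₀ + j)) le_rfl hh (by simpa) hright.le hk₀h fun j => by
      have hpos : 0 ≤ w₀ + h * k₀ + h * j := by positivity
      have hcast : w₀ + h * k₀ + h * j = w₀ + h * (k₀ + j : ℤ) := by push_cast; ring
      simpa only [← hcast, abs_of_nonneg hpos] using ha (k₀ + j) (abs_nonneg _)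
  obtain ⟨hs₂, hb₂⟩ := summable_and_abs_mul_tsum_nat_sub_gaussTail_le (E := E)
    (w₀ := -(w₀ + h * (k₀ - 1))) (a := fun j => a (k₀ + -(j + 1))) le_rfl hh (by simpa)
    (by linarith) (by linarith) fun j => by
      have hpos : 0 ≤ -(w₀ + h * (k₀ - 1)) + h * j := by
        have : 0 ≤ h * j := by positivity
        linarith
      have hcast : -(w₀ + h * (k₀ - 1)) + h * j = -(w₀ + h * (k₀ + -(j + 1) : ℤ)) := by
        push_cast; ring
      have := ha (k₀ + -(j + 1)) (abs_nonneg _)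
      rwa [← neg_sq (w₀ + _), ← abs_neg (w₀ + _), ← hcast, abs_of_nonneg hpos] at this
  have hsplit : ∑' k, a k = ∑' j : ℕ, a (k₀ + j) + ∑' j : ℕ, a (k₀ + -(j + 1)) := by
    rw [← (Equiv.addLeft k₀).tsum_eq a]
    exact tsum_of_nat_of_neg_add_one hs₁ hs₂
  rw [gaussTail_zero, abs_le] at hb₁ hb₂
  rw [hsplit, abs_le, mul_add]
  constructor <;> linarith [hb₁.1, hb₁.2, hb₂.1, hb₂.2]

lemma abs_div_div_div_sub_one_le {R T G S δ ε : ℝ} (hG : 0 < G) (hS : 0 < S)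
    (hR : |R - G| ≤ δ * G) (hT : |T - S| ≤ ε * S) (hε : ε ≤ 1 / 2) :
    |R / T / (G / S) - 1| ≤ 2 * (δ + ε) := by
  have hTS : S / 2 ≤ T := by nlinarith [(abs_le.mp hT).1]
  have hT0 : 0 < T := by linarith
  have hkey : R / T / (G / S) - 1 = S / T * ((R - G) / G - (T - S) / S) := by field_simp; ring
  have hST : S / T ≤ 2 := by rw [div_le_iff₀ hT0]; linarith
  have hRG : |(R - G) / G| ≤ δ := by rwa [abs_div, abs_of_pos hG, div_le_iff₀ hG]
  have hTS' : |(T - S) / S| ≤ ε := by rwa [abs_div, abs_of_pos hS, div_le_iff₀ hS]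
  rw [hkey, abs_mul, abs_of_pos (div_pos hS hT0)]
  gcongr
  exact (abs_sub _ _).trans (add_le_add hRG hTS')

theorem abs_tail_ratio_sub_one_le (hx : 0 ≤ x) (hh : 0 < h) (hhx : h * (1 + x) ≤ 1)
    {a : ℤ → ℝ} (ha : IsNearGaussian w₀ h x (E * (1 + x ^ 3)) a) (ha₀ : IsNearGaussian w₀ h 0 E a)
    (hsmall : exp 2 * (h + 2 * E) ≤ 1 / 2) :
    |(∑' k, {k : ℤ | x < w₀ + h * k}.indicator a k) / (∑' k, a k) /
        (gaussianReal 0 1 (Ioi x)).toReal - 1| ≤ 8 * exp 2 * (h + E) * (1 + x ^ 3) := by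
  have htail := abs_mul_tsum_indicator_sub_gaussTail_le hx hh hhx ha
  have htotal := abs_mul_tsum_sub_sqrt_two_pi_le hh (by nlinarith) ha₀
  rw [toReal_gaussianReal_Ioi, ← mul_div_mul_left (∑' k, _) _ hh.ne']
  refine (abs_div_div_div_sub_one_le (gaussTail_pos x) (by positivity) htail htotal hsmall).trans ?_
  have hE : 0 ≤ E :=
    nonneg_of_mul_nonneg_left ((abs_nonneg _).trans (ha₀ 0 (abs_nonneg _))) (expMajorant_pos _ _)
  have hx3 : 0 ≤ x ^ 3 := by positivity
  have hxle : 1 + x ≤ 2 * (1 + x ^ 3) := by nlinarith [sq_nonneg (x - 1)]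
  calc 2 * (exp 2 * (h * (1 + x) + 2 * (E * (1 + x ^ 3))) + exp 2 * (h + 2 * E))
      = 2 * exp 2 * (h * (1 + x) + 2 * (E * (1 + x ^ 3)) + h + 2 * E) := by ring
    _ ≤ 2 * exp 2 * (h * (2 * (1 + x ^ 3)) + 2 * (E * (1 + x ^ 3)) + h * (2 * (1 + x ^ 3)) +
          2 * (E * (1 + x ^ 3))) := by
        gcongr
        · nlinarith
        · nlinarith
    _ = 8 * exp 2 * (h + E) * (1 + x ^ 3) := by ring

end LatticeSums

section Binomial

lemma mul_binEntropy_div {n k : ℕ} (hk : 0 < k) (hkn : k < n) :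
    n * binEntropy (k / n) = n * log n - k * log k - (n - k) * log (n - k) := by
  have hn0 : (0 : ℝ) < n := by exact_mod_cast hk.trans hkn
  have hk0 : (0 : ℝ) < k := by exact_mod_cast hk
  have hnk : (0 : ℝ) < n - k := sub_pos.mpr (by exact_mod_cast hkn)
  rw [binEntropy, one_sub_div hn0.ne', inv_div, inv_div, log_div hn0.ne' hk0.ne',
    log_div hn0.ne' hnk.ne']
  field_simp
  ring

lemma choose_mul_pow_mul_pow_le_one (n k : ℕ) {p : ℝ} (hp0 : 0 ≤ p) (hp1 : p ≤ 1) :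
    n.choose k * (p ^ k * (1 - p) ^ (n - k)) ≤ 1 := by
  have : 0 ≤ 1 - p := sub_nonneg.mpr hp1
  rcases lt_or_ge n k with hkn | hkn
  · simp [Nat.choose_eq_zero_of_lt hkn]
  calc n.choose k * (p ^ k * (1 - p) ^ (n - k))
      = p ^ k * (1 - p) ^ (n - k) * n.choose k := mul_comm _ _
    _ ≤ ∑ j ∈ Finset.range (n + 1), p ^ j * (1 - p) ^ (n - j) * n.choose j :=
        Finset.single_le_sum (f := fun j => p ^ j * (1 - p) ^ (n - j) * n.choose j)
          (fun j _ => by positivity) (Finset.mem_range.mpr (Nat.lt_succ_of_le hkn))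
    _ = 1 := by rw [← add_pow, add_sub_cancel, one_pow]

lemma choose_le_exp_mul_binEntropy {n k : ℕ} (hkn : k ≤ n) :
    (n.choose k : ℝ) ≤ exp (n * binEntropy (k / n)) := by
  rcases k.eq_zero_or_pos with rfl | hk
  · simp
  rcases hkn.eq_or_lt with rfl | hkn'
  · simp [div_self (Nat.cast_ne_zero (R := ℝ).mpr hk.ne')]
  have hn0 : (0 : ℝ) < n := by exact_mod_cast hk.trans hkn'
  have hk0 : (0 : ℝ) < k := by exact_mod_cast hk
  have hnk : (0 : ℝ) < n - k := sub_pos.mpr (by exact_mod_cast hkn')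
  have hone := choose_mul_pow_mul_pow_le_one n k (p := k / n) (by positivity)
    (div_le_one_of_le₀ (by exact_mod_cast hkn) hn0.le)
  rw [one_sub_div hn0.ne'] at hone
  have hexp : exp (-(n * binEntropy (k / n))) = ((k : ℝ) / n) ^ k * ((n - k) / n) ^ (n - k) := by
    rw [← exp_log (x := ((k : ℝ) / n) ^ k * ((n - k) / n) ^ (n - k)) (by positivity),
      log_mul (by positivity) (by positivity), log_pow, log_pow, mul_binEntropy_div hk hkn',
      log_div hnk.ne' hn0.ne', log_div hk0.ne' hn0.ne', Nat.cast_sub hkn]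
    ring_nf
  rwa [← hexp, exp_neg, mul_inv_le_iff₀ (exp_pos _), one_mul] at hone

/-- The increments of `log (stirlingSeq n)` are dominated by those of `1 / (12 n)`. -/
lemma abs_log_stirlingSeq_sub_le {n : ℕ} (hn : n ≠ 0) :
    |log (Stirling.stirlingSeq n) - log √π| ≤ 1 / (12 * n) := by
  have hlow : log √π ≤ log (Stirling.stirlingSeq n) :=
    log_le_log (by positivity) (Stirling.sqrt_pi_le_stirlingSeq hn)
  obtain ⟨k, rfl⟩ := Nat.exists_eq_succ_of_ne_zero hn
  let f : ℕ → ℝ := fun j => log (Stirling.stirlingSeq (j + 1)) - 1 / 12 * (1 / ((j : ℝ) + 1))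
  have hmono : Monotone f := monotone_nat_of_le_succ fun j => by
    have hstep := Stirling.log_stirlingSeq_sdiff_le (j + 1)
    have htele : 1 / (12 * ((j : ℝ) + 1) * ((j : ℝ) + 1 + 1)) =
        1 / 12 * (1 / ((j : ℝ) + 1)) - 1 / 12 * (1 / ((j : ℝ) + 1 + 1)) := by field_simp; ring
    push_cast at hstep
    simp only [f]
    push_cast
    linarith
  have hlim : Tendsto f atTop (𝓝 (log √π - 1 / 12 * 0)) :=
    ((Stirling.tendsto_stirlingSeq_sqrt_pi.comp (tendsto_add_atTop_nat 1)).log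
      (by positivity)).sub (tendsto_one_div_add_atTop_nhds_zero_nat.const_mul _)
  have hup : f k ≤ log √π - 1 / 12 * 0 := hmono.ge_of_tendsto hlim k
  have hrw : 1 / (12 * ((k.succ : ℕ) : ℝ)) = 1 / 12 * (1 / ((k : ℝ) + 1)) := by
    push_cast; field_simp
  rw [abs_of_nonneg (sub_nonneg.mpr hlow), hrw]
  simp only [f] at hup
  linarith

lemma log_choose_eq {n k : ℕ} (hk : 0 < k) (hkn : k < n) :
    log (n.choose k) = n * binEntropy (k / n)
      + 1 / 2 * (log n - log 2 - log k - log (n - k))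
      + (log (Stirling.stirlingSeq n) - log (Stirling.stirlingSeq k)
        - log (Stirling.stirlingSeq (n - k))) := by
  have hn0 : (0 : ℝ) < n := by exact_mod_cast hk.trans hkn
  have hk0 : (0 : ℝ) < k := by exact_mod_cast hk
  have hnk : (0 : ℝ) < n - k := sub_pos.mpr (by exact_mod_cast hkn)
  rw [mul_binEntropy_div hk hkn, Stirling.log_stirlingSeq_formula,
    Stirling.log_stirlingSeq_formula, Stirling.log_stirlingSeq_formula, Nat.cast_choose ℝ hkn.le,
    log_div (by positivity) (by positivity), log_mul (by positivity) (by positivity),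
    Nat.cast_sub hkn.le, log_mul two_ne_zero hn0.ne', log_mul two_ne_zero hk0.ne',
    log_mul two_ne_zero hnk.ne', log_div hn0.ne' (exp_ne_zero 1), log_div hk0.ne' (exp_ne_zero 1),
    log_div hnk.ne' (exp_ne_zero 1), log_exp]
  ring

lemma abs_log_choose_sub_le {n k : ℕ} (hk : 0 < k) (hkn : k < n) :
    |log (n.choose k) - (n * binEntropy (k / n) - 1 / 2 * log (2 * π * (k * (n - k) / n)))| ≤
      1 / (12 * n) + 1 / (12 * k) + 1 / (12 * (n - k)) := by
  have hn0 : (0 : ℝ) < n := by exact_mod_cast hk.trans hkn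
  have hk0 : (0 : ℝ) < k := by exact_mod_cast hk
  have hnk : (0 : ℝ) < n - k := sub_pos.mpr (by exact_mod_cast hkn)
  have hσn := abs_log_stirlingSeq_sub_le (n := n) (by lia)
  have hσk := abs_log_stirlingSeq_sub_le (n := k) (by lia)
  have hσnk := abs_log_stirlingSeq_sub_le (n := n - k) (by lia)
  rw [Nat.cast_sub hkn.le] at hσnk
  have hlog : 1 / 2 * log (2 * π * (k * (n - k) / n)) =
      log √π - 1 / 2 * (log n - log 2 - log k - log (n - k)) := by
    rw [log_mul (by positivity) (by positivity), log_div (by positivity) hn0.ne',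
      log_mul hk0.ne' hnk.ne', log_mul two_ne_zero pi_ne_zero, log_sqrt pi_pos.le]
    ring
  rw [log_choose_eq hk hkn, hlog]
  rw [abs_le] at hσn hσk hσnk ⊢
  constructor <;> linarith [hσn.1, hσn.2, hσk.1, hσk.2, hσnk.1, hσnk.2]

end Binomial

section LatticeMagnetization

/-- The magnetization per particle of a configuration with `k` plus spins among `n`. The number
`k` ranges over `ℤ`, so that lattice sums are not confined to `0 ≤ k ≤ n`. -/
noncomputable def latticeMag (n : ℕ) (k : ℤ) : ℝ := (2 * k - n) / n

/-- The binomial coefficient `n.choose k`, extended by zero to all integers `k`. -/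
def intChoose (n : ℕ) (k : ℤ) : ℕ := if 0 ≤ k then n.choose k.toNat else 0

lemma binEnt_eq_neg_binEntropy (y : ℝ) : binEnt y = -binEntropy ((1 + y) / 2) := by
  rw [binEnt, binEntropy, log_inv, log_inv, show 1 - (1 + y) / 2 = (1 - y) / 2 by ring]
  ring

variable {n : ℕ}

lemma half_one_add_latticeMag (hn : n ≠ 0) (k : ℤ) : (1 + latticeMag n k) / 2 = k / n := by
  have hn0 : (n : ℝ) ≠ 0 := Nat.cast_ne_zero.mpr hn
  rw [latticeMag]
  field_simp
  ring

lemma half_one_sub_latticeMag (hn : n ≠ 0) (k : ℤ) :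
    (1 - latticeMag n k) / 2 = (n - k) / n := by
  have hn0 : (n : ℝ) ≠ 0 := Nat.cast_ne_zero.mpr hn
  rw [latticeMag]
  field_simp
  ring

lemma intChoose_natCast (n k : ℕ) : intChoose n k = n.choose k := by simp [intChoose]

lemma exists_le_of_intChoose_ne_zero {k : ℤ} (hk : intChoose n k ≠ 0) :
    ∃ j ≤ n, k = (j : ℕ) := by
  obtain ⟨hk₀, hchoose⟩ : 0 ≤ k ∧ n.choose k.toNat ≠ 0 := by simpa [intChoose] using hk
  exact ⟨k.toNat, Nat.choose_ne_zero_iff.mp hchoose, (Int.toNat_of_nonneg hk₀).symm⟩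

lemma latticeMag_mem_Icc_of_intChoose_ne_zero (hn : n ≠ 0) {k : ℤ} (hk : intChoose n k ≠ 0) :
    latticeMag n k ∈ Set.Icc (-1) 1 := by
  obtain ⟨j, hj, rfl⟩ := exists_le_of_intChoose_ne_zero hk
  have hj' : (j : ℝ) ≤ n := mod_cast hj
  have hplus := half_one_add_latticeMag hn j
  have hminus := half_one_sub_latticeMag hn j
  have h₀ : 0 ≤ ((j : ℤ) : ℝ) / n := by positivity
  have h₁ : 0 ≤ ((n : ℝ) - (j : ℤ)) / n := div_nonneg (by simpa using hj') (by positivity)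
  exact ⟨by linarith, by linarith⟩

lemma intChoose_le_exp_neg_mul_binEnt (n : ℕ) (k : ℤ) :
    (intChoose n k : ℝ) ≤ exp (-(n * binEnt (latticeMag n k))) := by
  rcases eq_or_ne (intChoose n k) 0 with hk | hk
  · rw [hk, Nat.cast_zero]
    exact (exp_pos _).le
  obtain ⟨j, hj, rfl⟩ := exists_le_of_intChoose_ne_zero hk
  rw [intChoose_natCast, binEnt_eq_neg_binEntropy]
  rcases eq_or_ne n 0 with rfl | hn
  · simp [Nat.le_zero.mp hj]
  · rw [half_one_add_latticeMag hn, mul_neg, neg_neg]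
    exact choose_le_exp_mul_binEntropy hj

lemma exists_natCast_of_latticeMag_mem_Ioo (hn : n ≠ 0) {k : ℤ}
    (hk : latticeMag n k ∈ Set.Ioo (-1) 1) : ∃ j : ℕ, 0 < j ∧ j < n ∧ k = j := by
  have hn₀ : (0 : ℝ) < n := by positivity
  have hplus := half_one_add_latticeMag hn k
  have hminus := half_one_sub_latticeMag hn k
  have hk₀ : (0 : ℝ) < k := (div_pos_iff_of_pos_right hn₀).mp (hplus ▸ by linarith [hk.1])
  have hkn : (0 : ℝ) < n - k := (div_pos_iff_of_pos_right hn₀).mp (hminus ▸ by linarith [hk.2])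
  lift k to ℕ using mod_cast hk₀.le
  exact ⟨k, mod_cast hk₀, by exact_mod_cast sub_pos.mp hkn, rfl⟩

lemma intChoose_pos_of_latticeMag_mem_Ioo (hn : n ≠ 0) {k : ℤ}
    (hk : latticeMag n k ∈ Set.Ioo (-1) 1) : 0 < intChoose n k := by
  obtain ⟨j, -, hj, rfl⟩ := exists_natCast_of_latticeMag_mem_Ioo hn hk
  rw [intChoose_natCast]
  exact Nat.choose_pos hj.le

lemma abs_log_intChoose_add_le (hn : n ≠ 0) {k : ℤ} (hk : latticeMag n k ∈ Set.Ioo (-1) 1) :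
    |log (intChoose n k) + n * binEnt (latticeMag n k)
        + 1 / 2 * log (π * n * (1 - latticeMag n k ^ 2) / 2)| ≤
      1 / n * (1 / 12 + 1 / (6 * (1 + latticeMag n k)) + 1 / (6 * (1 - latticeMag n k))) := by
  obtain ⟨j, hj, hjn, rfl⟩ := exists_natCast_of_latticeMag_mem_Ioo hn hk
  have : (0 : ℝ) < n := by positivity
  have : (0 : ℝ) < j := mod_cast hj
  have hjn₀ : (0 : ℝ) < n - j := sub_pos.mpr (mod_cast hjn)
  have hplus := half_one_add_latticeMag hn j
  have hminus := half_one_sub_latticeMag hn j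
  rw [Int.cast_natCast] at hplus hminus
  have hplus' : 1 + latticeMag n j = 2 * (j / n) := by linarith
  have hminus' : 1 - latticeMag n j = 2 * ((n - j) / n) := by linarith
  have hsq : π * n * (1 - latticeMag n j ^ 2) / 2 = 2 * π * (j * (n - j) / n) := by
    rw [show 1 - latticeMag n j ^ 2 = (1 - latticeMag n j) * (1 + latticeMag n j) by ring,
      hplus', hminus']
    field_simp
  rw [binEnt_eq_neg_binEntropy, intChoose_natCast, hplus, hsq, hplus', hminus']
  convert abs_log_choose_sub_le hj hjn using 1
  · congr 1
    ring
  · field_simp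
    ring

end LatticeMagnetization

section Perturbation

lemma isBigO_sub_taylorPolynomial {f : ℝ → ℝ} {x₀ : ℝ} {n : ℕ} (hf : ContDiffAt ℝ (n + 1) f x₀) :
    (fun x => f x - ∑ k ∈ Finset.range (n + 1),
      iteratedDeriv k f x₀ / k.factorial * (x - x₀) ^ k) =O[𝓝 x₀] fun x => (x - x₀) ^ (n + 1) := by
  obtain ⟨u, hu, hfu⟩ := hf.contDiffOn (m := n + 1) le_rfl (by simp)
  obtain ⟨r, hr, hru⟩ := Metric.mem_nhds_iff.mp (by simpa using hu)
  have hball : Metric.ball x₀ r ∈ 𝓝 x₀ := Metric.ball_mem_nhds x₀ hr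
  have hx₀ : x₀ ∈ Metric.ball x₀ r := Metric.mem_ball_self hr
  have h := (taylor_isLittleO (convex_ball x₀ r) hx₀ (n := n + 1) (mod_cast hfu.mono hru)).isBigO
  rw [nhdsWithin_eq_nhds.mpr hball] at h
  have hlast : (fun x => iteratedDeriv (n + 1) f x₀ / (n + 1).factorial * (x - x₀) ^ (n + 1))
      =O[𝓝 x₀] fun x => (x - x₀) ^ (n + 1) :=
    Asymptotics.isBigO_const_mul_self _ _ _
  refine (h.add hlast).congr_left fun x => ?_
  rw [taylor_within_apply, Finset.sum_range_succ _ (n + 1), sub_add_eq_sub_sub]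
  have hterm (k : ℕ) (d : ℝ) : (k.factorial : ℝ)⁻¹ * (x - x₀) ^ k * d =
      d / k.factorial * (x - x₀) ^ k := by ring
  simp only [smul_eq_mul, iteratedDerivWithin_of_isOpen Metric.isOpen_ball hx₀, hterm,
    sub_add_cancel]

lemma abs_exp_sub_one_le_mul_exp_abs (r : ℝ) : |exp r - 1| ≤ |r| * exp |r| := by
  have h := Complex.norm_exp_sub_sum_le_norm_mul_exp r 1
  simp only [Finset.sum_range_one, pow_zero, Nat.factorial_zero, Nat.cast_one, div_one, pow_one,
    Complex.norm_real, norm_eq_abs] at h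
  exact_mod_cast h

lemma one_add_cube_le {x u : ℝ} (hx : 0 ≤ x) (hu : 0 ≤ u) :
    1 + (x + u) ^ 3 ≤ 24 * (1 + x ^ 3) * exp u := by
  have hconv : (x + u) ^ 3 ≤ 4 * (x ^ 3 + u ^ 3) :=
    (add_pow_le hx hu 3).trans_eq (by norm_num)
  have hexp : 1 + u ^ 3 ≤ 6 * exp u := by
    have h := sum_le_exp_of_nonneg hu 4
    simp only [Finset.sum_range_succ, Finset.sum_range_zero, Nat.factorial] at h
    norm_num at h
    nlinarith [sq_nonneg u]
  calc 1 + (x + u) ^ 3 ≤ 4 * (1 + x ^ 3) * (1 + u ^ 3) := by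
        nlinarith [pow_nonneg hx 3, pow_nonneg hu 3, mul_nonneg (pow_nonneg hx 3) (pow_nonneg hu 3)]
    _ ≤ 4 * (1 + x ^ 3) * (6 * exp u) := by gcongr
    _ = _ := by ring

/-- The cubic error splits into `x³/s`, which is bounded, and `u³/s`, which is small enough for a
Gaussian factor `exp(-u²/2)` to absorb it. -/
lemma mul_one_add_cube_div_le {D M s x u : ℝ} (hD : 0 ≤ D) (hs : 1 ≤ s) (hx : 0 ≤ x) (hu : 0 ≤ u)
    (hxs : x ^ 3 ≤ M * s) (hus : 32 * D * u ≤ s) :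
    D * (1 + (x + u) ^ 3) / s ≤ D * (1 + 4 * M) + u ^ 2 / 8 := by
  have hconv : (x + u) ^ 3 ≤ 4 * (x ^ 3 + u ^ 3) :=
    (add_pow_le hx hu 3).trans_eq (by norm_num)
  have hcubic : D * (1 + (x + u) ^ 3) ≤ D * (1 + 4 * (x ^ 3 + u ^ 3)) := by gcongr
  rw [div_le_iff₀ (by linarith)]
  nlinarith [mul_le_mul_of_nonneg_left hxs hD, mul_le_mul_of_nonneg_left hs hD,
    mul_le_mul_of_nonneg_left hus (sq_nonneg u)]

lemma abs_exp_add_sub_exp_le_mul_expMajorant {D M s x w r : ℝ} (hD : 0 ≤ D) (hs : 1 ≤ s)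
    (hx : 0 ≤ x) (hxw : x ≤ w) (hxs : x ^ 3 ≤ M * s) (hws : 32 * D * w ≤ s)
    (hr : |r| ≤ D * (1 + w ^ 3) / s) :
    |exp (-w ^ 2 / 2 + r) - exp (-w ^ 2 / 2)| ≤
      24 * D * exp (D * (1 + 4 * M) + 3) * (1 + x ^ 3) / s * expMajorant x w := by
  have : 0 < s := by linarith
  obtain ⟨u, rfl⟩ : ∃ u, w = x + u := ⟨w - x, by ring⟩
  have hu : 0 ≤ u := by linarith
  have habs : |r| ≤ D * (1 + 4 * M) + u ^ 2 / 8 :=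
    hr.trans (mul_one_add_cube_div_le hD hs hx hu hxs (le_trans (by gcongr; linarith) hws))
  have hexponent : -(x + u) ^ 2 / 2 + (u + (D * (1 + 4 * M) + u ^ 2 / 8)) ≤
      D * (1 + 4 * M) + 3 + (-x ^ 2 / 2 - (1 + x) * (x + u - x)) := by
    nlinarith [sq_nonneg (3 * u - 8)]
  calc |exp (-(x + u) ^ 2 / 2 + r) - exp (-(x + u) ^ 2 / 2)|
      = exp (-(x + u) ^ 2 / 2) * |exp r - 1| := by
        rw [exp_add, ← mul_sub_one, abs_mul, abs_of_pos (exp_pos _)]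
    _ ≤ exp (-(x + u) ^ 2 / 2) * (|r| * exp |r|) := by
        gcongr
        exact abs_exp_sub_one_le_mul_exp_abs r
    _ ≤ exp (-(x + u) ^ 2 / 2) * (D * (24 * (1 + x ^ 3) * exp u) / s *
          exp (D * (1 + 4 * M) + u ^ 2 / 8)) := by
        gcongr
        exact hr.trans (by gcongr; exact one_add_cube_le hx hu)
    _ = 24 * D * (1 + x ^ 3) / s *
          exp (-(x + u) ^ 2 / 2 + (u + (D * (1 + 4 * M) + u ^ 2 / 8))) := by
        rw [exp_add (-(x + u) ^ 2 / 2), exp_add u]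
        ring
    _ ≤ 24 * D * (1 + x ^ 3) / s *
          exp (D * (1 + 4 * M) + 3 + (-x ^ 2 / 2 - (1 + x) * (x + u - x))) := by gcongr
    _ = _ := by
        rw [exp_add, expMajorant]
        ring

end Perturbation

section LocalExpansion

/-- The total statistical weight of the configurations with `k` plus spins among `n`, when the
magnetization `y` has free energy `φ y` per particle and entropy `-binEnt y` per particle. -/
noncomputable def latticeWeight (φ : ℝ → ℝ) (n : ℕ) (k : ℤ) : ℝ :=
  intChoose n k * exp (n * (binEnt (latticeMag n k) - φ (latticeMag n k)))

/-- The reciprocal of the Stirling approximation to `latticeWeight φ n` at magnetization `m`. -/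
noncomputable def laplaceNormalizer (φ : ℝ → ℝ) (m : ℝ) (n : ℕ) : ℝ :=
  exp (n * φ m) * √(π * n * (1 - m ^ 2) / 2)

/-- The value of the standardized total magnetization `W_n = (S_n - n m)/√(n/b)` on configurations
with `k` plus spins among `n`. -/
noncomputable def standardMag (b m : ℝ) (n : ℕ) (k : ℤ) : ℝ := √(n * b) * (latticeMag n k - m)

variable {φ : ℝ → ℝ} {m : ℝ}

lemma latticeWeight_nonneg (φ : ℝ → ℝ) (n : ℕ) (k : ℤ) : 0 ≤ latticeWeight φ n k := by
  unfold latticeWeight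
  positivity

lemma laplaceNormalizer_nonneg (φ : ℝ → ℝ) (m : ℝ) (n : ℕ) : 0 ≤ laplaceNormalizer φ m n := by
  unfold laplaceNormalizer
  positivity

lemma latticeWeight_pos (φ : ℝ → ℝ) {n : ℕ} (hn : n ≠ 0) {k : ℤ}
    (hk : latticeMag n k ∈ Set.Ioo (-1) 1) : 0 < latticeWeight φ n k :=
  mul_pos (Nat.cast_pos.mpr (intChoose_pos_of_latticeMag_mem_Ioo hn hk)) (exp_pos _)

lemma abs_standardMag (b m : ℝ) (n : ℕ) (k : ℤ) :
    |standardMag b m n k| = √n * √b * |latticeMag n k - m| := by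
  rw [standardMag, sqrt_mul n.cast_nonneg, abs_mul, abs_of_nonneg (by positivity)]

lemma laplaceNormalizer_pos (φ : ℝ → ℝ) (hm : m ∈ Set.Ioo (-1) 1) {n : ℕ} (hn : n ≠ 0) :
    0 < laplaceNormalizer φ m n := by
  have hm₂ : 0 < 1 - m ^ 2 := by nlinarith [hm.1, hm.2]
  unfold laplaceNormalizer
  positivity

lemma laplaceNormalizer_mul_latticeWeight_le (φ : ℝ → ℝ) (m : ℝ) (n : ℕ) (k : ℤ) :
    laplaceNormalizer φ m n * latticeWeight φ n k ≤
      2 * √n * exp (-(n * (φ (latticeMag n k) - φ m))) := by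
  have hsqrt : √(π * n * (1 - m ^ 2) / 2) ≤ 2 * √n := by
    rw [show 2 * √(n : ℝ) = √(4 * n) by
      rw [sqrt_mul (by norm_num), show (4 : ℝ) = 2 ^ 2 by norm_num, sqrt_sq (by norm_num)]]
    gcongr
    nlinarith [pi_le_four, pi_pos, mul_nonneg pi_pos.le n.cast_nonneg (α := ℝ),
      mul_nonneg (mul_nonneg pi_pos.le (n.cast_nonneg (α := ℝ))) (sq_nonneg m)]
  calc _ ≤ exp (n * φ m) * (2 * √n) * (exp (-(n * binEnt (latticeMag n k))) *
          exp (n * (binEnt (latticeMag n k) - φ (latticeMag n k)))) := by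
        unfold laplaceNormalizer latticeWeight
        gcongr
        exact intChoose_le_exp_neg_mul_binEnt n k
    _ = 2 * √n * exp (n * φ m + (-(n * binEnt (latticeMag n k)) +
          n * (binEnt (latticeMag n k) - φ (latticeMag n k)))) := by
        rw [exp_add, exp_add]
        ring
    _ = _ := by ring_nf

lemma log_laplaceNormalizer_mul_latticeWeight (φ : ℝ → ℝ) (hm : m ∈ Set.Ioo (-1) 1) {n : ℕ}
    (hn : n ≠ 0) {k : ℤ} (hk : latticeMag n k ∈ Set.Ioo (-1) 1) :
    log (laplaceNormalizer φ m n * latticeWeight φ n k) =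
      (log (intChoose n k) + n * binEnt (latticeMag n k)
          + 1 / 2 * log (π * n * (1 - latticeMag n k ^ 2) / 2))
        - n * (φ (latticeMag n k) - φ m)
        - 1 / 2 * (log (1 - latticeMag n k ^ 2) - log (1 - m ^ 2)) := by
  have hm₂ : 0 < 1 - m ^ 2 := by nlinarith [hm.1, hm.2]
  have hk₂ : 0 < 1 - latticeMag n k ^ 2 := by nlinarith [hk.1, hk.2]
  have hchoose : (intChoose n k : ℝ) ≠ 0 :=
    Nat.cast_ne_zero.mpr (intChoose_pos_of_latticeMag_mem_Ioo hn hk).ne'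
  rw [laplaceNormalizer, latticeWeight, log_mul (by positivity) (by positivity),
    log_mul (by positivity) (by positivity), log_mul hchoose (by positivity), log_exp, log_exp,
    log_sqrt (by positivity), mul_div_right_comm _ (1 - m ^ 2), mul_div_right_comm _ (1 - _ ^ 2),
    log_mul (by positivity) hm₂.ne', log_mul (by positivity) hk₂.ne']
  ring

lemma isBigO_sub_half_iteratedDeriv_two (hφ : ContDiffAt ℝ 3 φ m) (hcrit : deriv φ m = 0) :
    (fun y => φ y - φ m - iteratedDeriv 2 φ m / 2 * (y - m) ^ 2) =O[𝓝 m] fun y => (y - m) ^ 3 := by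
  have h := isBigO_sub_taylorPolynomial (n := 2) (by norm_num; exact hφ)
  refine h.congr_left fun y => ?_
  simp only [Finset.sum_range_succ, Finset.sum_range_zero, iteratedDeriv_zero, iteratedDeriv_one,
    hcrit, Nat.factorial_zero, Nat.factorial_one, Nat.factorial_two]
  push_cast
  ring

lemma isBigO_log_one_sub_sq_sub (hm : m ∈ Set.Ioo (-1) 1) :
    (fun y => log (1 - y ^ 2) - log (1 - m ^ 2)) =O[𝓝 m] fun y => y - m := by
  have hm₂ : 1 - m ^ 2 ≠ 0 := by nlinarith [hm.1, hm.2]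
  exact DifferentiableAt.isBigO_sub (f := fun y => log (1 - y ^ 2))
    (by fun_prop (disch := exact hm₂))

lemma local_error_le {C₁ C₂ C₃ β s d : ℝ} (hC₁ : 0 ≤ C₁) (hC₂ : 0 ≤ C₂) (hC₃ : 0 ≤ C₃)
    (hβ : 0 < β) (hs : 1 ≤ s) (hd : 0 ≤ d) :
    C₁ / s ^ 2 + s ^ 2 * (C₂ * d ^ 3) + C₃ * d ≤
      (C₁ + C₂ + C₃) * (1 + 1 / β ^ 3) * (1 + (s * β * d) ^ 3) / s := by
  have hs₀ : 0 < s := by linarith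
  have hlin : s * d ≤ 1 + (s * d) ^ 3 := by
    nlinarith [mul_nonneg hs₀.le hd, sq_nonneg (s * d - 1), sq_nonneg (s * d)]
  have hinv : C₁ / s ≤ C₁ := div_le_self hC₁ hs
  have hrescale : 1 + (s * d) ^ 3 ≤ (1 + 1 / β ^ 3) * (1 + (s * β * d) ^ 3) := by
    rw [show (1 + 1 / β ^ 3) * (1 + (s * β * d) ^ 3) =
      1 + (s * d) ^ 3 + (1 / β ^ 3 + (s * β * d) ^ 3) by field_simp; ring]
    exact le_add_of_nonneg_right (by positivity)
  calc _ = (C₁ / s + C₂ * (s * d) ^ 3 + C₃ * (s * d)) / s := by field_simp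
    _ ≤ (C₁ + C₂ + C₃) * (1 + (s * d) ^ 3) / s := by
        gcongr
        nlinarith [mul_le_mul_of_nonneg_left hlin hC₃, pow_nonneg (mul_nonneg hs₀.le hd) 3]
    _ ≤ (C₁ + C₂ + C₃) * ((1 + 1 / β ^ 3) * (1 + (s * β * d) ^ 3)) / s := by gcongr
    _ = _ := by ring

lemma abs_log_laplaceNormalizer_mul_latticeWeight_add_le (φ : ℝ → ℝ) (hm : m ∈ Set.Ioo (-1) 1)
    {b : ℝ} (hb : 0 ≤ b) {n : ℕ} (hn : n ≠ 0) {k : ℤ} (hk : latticeMag n k ∈ Set.Ioo (-1) 1) :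
    |log (laplaceNormalizer φ m n * latticeWeight φ n k) + standardMag b m n k ^ 2 / 2| ≤
      1 / n * (1 / 12 + 1 / (6 * (1 + latticeMag n k)) + 1 / (6 * (1 - latticeMag n k)))
        + n * |φ (latticeMag n k) - φ m - b / 2 * (latticeMag n k - m) ^ 2|
        + 1 / 2 * |log (1 - latticeMag n k ^ 2) - log (1 - m ^ 2)| := by
  have hStirling := abs_log_intChoose_add_le hn hk
  rw [log_laplaceNormalizer_mul_latticeWeight φ hm hn hk, standardMag, mul_pow,
    sq_sqrt (by positivity)]
  set y := latticeMag n k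
  calc _ = |(log (intChoose n k) + n * binEnt y + 1 / 2 * log (π * n * (1 - y ^ 2) / 2))
          - n * (φ y - φ m - b / 2 * (y - m) ^ 2)
          - 1 / 2 * (log (1 - y ^ 2) - log (1 - m ^ 2))| := by ring_nf
    _ ≤ |log (intChoose n k) + n * binEnt y + 1 / 2 * log (π * n * (1 - y ^ 2) / 2)|
          + |n * (φ y - φ m - b / 2 * (y - m) ^ 2)|
          + |1 / 2 * (log (1 - y ^ 2) - log (1 - m ^ 2))| :=
        (abs_sub _ _).trans (by gcongr; exact abs_sub _ _)
    _ ≤ _ := by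
        rw [abs_mul, abs_mul, Nat.abs_cast, abs_of_pos (one_half_pos (α := ℝ))]
        gcongr

/-- In terms of `w = standardMag b m n k`, the error `1/n` of Stirling's formula, the cubic Taylor
remainder of `n φ` and the variation of the prefactor are all `O((1 + |w|³)/√n)`. -/
lemma exists_abs_log_add_le (hφ : ContDiffAt ℝ 3 φ m) (hm : m ∈ Set.Ioo (-1) 1)
    (hcrit : deriv φ m = 0) (hconv : 0 < iteratedDeriv 2 φ m) :
    ∃ D ≥ 0, ∀ᶠ y in 𝓝 m, ∀ n ≠ 0, ∀ k, latticeMag n k = y →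
      |log (laplaceNormalizer φ m n * latticeWeight φ n k)
          + standardMag (iteratedDeriv 2 φ m) m n k ^ 2 / 2| ≤
        D * (1 + |standardMag (iteratedDeriv 2 φ m) m n k| ^ 3) / √n := by
  obtain ⟨C₂, hC₂, hTaylor⟩ := (isBigO_sub_half_iteratedDeriv_two hφ hcrit).exists_nonneg
  obtain ⟨C₃, hC₃, hlog⟩ := (isBigO_log_one_sub_sq_sub hm).exists_nonneg
  have hStirling :
      ContinuousAt (fun y : ℝ => 1 / 12 + 1 / (6 * (1 + y)) + 1 / (6 * (1 - y))) m := by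
    have hplus : 6 * (1 + m) ≠ 0 := by linarith [hm.1]
    have hminus : 6 * (1 - m) ≠ 0 := by linarith [hm.2]
    fun_prop (disch := assumption)
  obtain ⟨C₁, hC₁, hStirling'⟩ := (hStirling.isBigO_one ℝ).exists_nonneg
  set b := iteratedDeriv 2 φ m
  refine ⟨(C₁ + C₂ + C₃) * (1 + 1 / √b ^ 3), by positivity, ?_⟩
  filter_upwards [hTaylor.bound, hlog.bound, hStirling'.bound, isOpen_Ioo.mem_nhds hm]
    with y hyTaylor hylog hyStirling hy n hn k hk
  subst hk
  have hn₁ : 1 ≤ √(n : ℝ) := one_le_sqrt.mpr (mod_cast Nat.one_le_iff_ne_zero.mpr hn)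
  simp only [norm_eq_abs, abs_pow, abs_one, mul_one] at hyTaylor hylog hyStirling
  refine (abs_log_laplaceNormalizer_mul_latticeWeight_add_le φ hm hconv.le hn hy).trans ?_
  rw [abs_standardMag]
  refine le_trans ?_
    (local_error_le hC₁ hC₂ hC₃ (sqrt_pos.mpr hconv) hn₁ (abs_nonneg (latticeMag n k - m)))
  rw [sq_sqrt n.cast_nonneg, div_eq_inv_mul C₁, ← one_div]
  refine add_le_add (add_le_add ?_ (by gcongr)) ?_
  · gcongr
    exact (le_abs_self _).trans hyStirling
  · exact (mul_le_of_le_one_left (abs_nonneg _) (by norm_num)).trans hylog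

end LocalExpansion

section Localization

lemma rpow_one_sixth_pow_three {t : ℝ} (ht : 0 ≤ t) : (t ^ (1 / 6 : ℝ)) ^ 3 = √t := by
  rw [sqrt_eq_rpow, ← rpow_mul_natCast ht]
  norm_num

lemma eventually_one_add_mul_rpow_le (c : ℝ) {θ : ℝ} (hθ : 0 < θ) :
    ∀ᶠ n : ℕ in atTop, 1 + c * (n : ℝ) ^ (1 / 6 : ℝ) ≤ θ * √n := by
  have htendsto : Tendsto (fun n : ℕ => (n : ℝ) ^ (1 / 6 : ℝ)) atTop atTop :=
    (tendsto_rpow_atTop (by norm_num)).comp tendsto_natCast_atTop_atTop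
  filter_upwards [htendsto.eventually_ge_atTop 1,
    htendsto.eventually_ge_atTop ((1 + |c|) / θ)] with n ht₁ htc
  rw [← rpow_one_sixth_pow_three n.cast_nonneg]
  set t := (n : ℝ) ^ (1 / 6 : ℝ)
  rw [div_le_iff₀ hθ] at htc
  calc 1 + c * t ≤ (1 + |c|) * t := by nlinarith [le_abs_self c]
    _ ≤ θ * t ^ 2 := by nlinarith
    _ ≤ θ * t ^ 3 := by
        gcongr
        · norm_num

lemma eventually_two_mul_le_exp {θ : ℝ} (hθ : 0 < θ) :
    ∀ᶠ t : ℝ in atTop, 2 * t ≤ exp (θ * t) := by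
  filter_upwards [(isLittleO_pow_exp_pos_mul_atTop 1 hθ).bound (half_pos one_pos),
    eventually_ge_atTop 0] with t ht ht₀
  rw [norm_of_nonneg (by positivity), norm_of_nonneg (exp_pos _).le, pow_one] at ht
  linarith

lemma tendsto_sqrt_natCast_atTop : Tendsto (fun n : ℕ => √(n : ℝ)) atTop atTop :=
  tendsto_sqrt_atTop.comp tendsto_natCast_atTop_atTop

lemma eventually_exp_neg_sq_div_two_le_mul_expMajorant (c : ℝ) {κ : ℝ} (hκ : 0 < κ) :
    ∀ᶠ n : ℕ in atTop, ∀ x w : ℝ, x ≤ c * (n : ℝ) ^ (1 / 6 : ℝ) → κ * √n ≤ w →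
      exp (-w ^ 2 / 2) ≤ 1 / √n * expMajorant x w := by
  filter_upwards [eventually_one_add_mul_rpow_le c (half_pos hκ),
    tendsto_sqrt_natCast_atTop.eventually (eventually_two_mul_le_exp (half_pos hκ)),
    tendsto_sqrt_natCast_atTop.eventually_ge_atTop (8 / κ),
    tendsto_sqrt_natCast_atTop.eventually_gt_atTop 0] with n hn hexp hlarge hn₀ x w hx hw
  have hgap : κ / 2 * √n ≤ w - x := by linarith
  have hgap₄ : 4 ≤ κ / 2 * √(n : ℝ) := by
    rw [div_le_iff₀ hκ] at hlarge
    linarith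
  calc exp (-w ^ 2 / 2) ≤ exp (-(κ / 2 * √n) + (-x ^ 2 / 2 - (1 + x) * (w - x))) := by
        gcongr
        nlinarith
    _ = (exp (κ / 2 * √n))⁻¹ * expMajorant x w := by rw [exp_add, exp_neg, expMajorant]
    _ ≤ 1 / √n * expMajorant x w := by
        rw [← one_div]
        gcongr
        · exact (expMajorant_pos x w).le
        · linarith

lemma eventually_mul_exp_neg_le_mul_expMajorant (c : ℝ) {L ε : ℝ} (hL : 0 ≤ L) (hε : 0 < ε) :
    ∀ᶠ n : ℕ in atTop, ∀ x w : ℝ, 0 ≤ x → x ≤ c * (n : ℝ) ^ (1 / 6 : ℝ) → w ≤ L * √n →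
      2 * √n * exp (-(n * ε)) ≤ 1 / √n * expMajorant x w := by
  have hθ : 0 < ε / (1 + 2 * L) := by positivity
  have hθL : ε / (1 + 2 * L) * L ≤ ε / 2 := by
    rw [div_mul_eq_mul_div, div_le_div_iff₀ (by positivity) two_pos]
    linarith
  filter_upwards [eventually_one_add_mul_rpow_le c hθ,
    tendsto_natCast_atTop_atTop.eventually (eventually_two_mul_le_exp (half_pos hε)),
    eventually_gt_atTop 0] with n hn hexp hn₀ x w hx hxc hw
  have hexponent : (1 + x) * w ≤ ε / 2 * n :=
    calc (1 + x) * w ≤ (1 + x) * (L * √n) := by gcongr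
      _ ≤ ε / (1 + 2 * L) * √n * (L * √n) := by
        gcongr
        linarith
      _ = ε / (1 + 2 * L) * L * n := by
        rw [mul_mul_mul_comm, mul_self_sqrt n.cast_nonneg]
      _ ≤ ε / 2 * n := by gcongr
  calc 2 * √n * exp (-(n * ε)) = 1 / √n * (2 * n * exp (-(n * ε))) := by
        rw [mul_assoc, one_div_mul_eq_div, mul_div_right_comm, mul_div_assoc, div_sqrt, mul_assoc]
    _ ≤ 1 / √n * (exp (ε / 2 * n) * exp (-(n * ε))) := by gcongr
    _ ≤ 1 / √n * expMajorant x w := by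
        rw [← exp_add, expMajorant]
        gcongr
        nlinarith

lemma exists_forall_abs_div_gaussianReal_Ioi_sub_one_le (c : ℝ) (N : ℕ) :
    ∃ C, ∀ n : ℕ, n ≠ 0 → n ≤ N → ∀ x, 0 ≤ x → x ≤ c * (n : ℝ) ^ (1 / 6 : ℝ) →
      ∀ r ∈ Set.Icc (0 : ℝ) 1,
        |r / (gaussianReal 0 1 (Set.Ioi x)).toReal - 1| ≤ C * (1 + x ^ 3) / √n := by
  set q := (gaussianReal 0 1 (Set.Ioi (|c| * (N : ℝ) ^ (1 / 6 : ℝ)))).toReal with hq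
  have hq₀ : 0 < q := by
    rw [hq, toReal_gaussianReal_Ioi]
    exact div_pos (gaussTail_pos _) (by positivity)
  refine ⟨(1 / q + 1) * √N, fun n hn hnN x hx hxc r hr => ?_⟩
  have hmono : q ≤ (gaussianReal 0 1 (Set.Ioi x)).toReal := by
    refine ENNReal.toReal_mono (measure_ne_top _ _) (measure_mono (Set.Ioi_subset_Ioi ?_))
    refine hxc.trans ?_
    gcongr
    exact le_abs_self c
  have hratio : r / (gaussianReal 0 1 (Set.Ioi x)).toReal ≤ 1 / q :=
    div_le_div₀ zero_le_one hr.2 hq₀ hmono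
  have hratio₀ : 0 ≤ r / (gaussianReal 0 1 (Set.Ioi x)).toReal :=
    div_nonneg hr.1 ENNReal.toReal_nonneg
  rw [le_div_iff₀ (by positivity)]
  calc _ ≤ (1 / q + 1) * √N := by
        gcongr
        rw [abs_le]
        constructor <;> linarith [one_div_pos.mpr hq₀]
    _ ≤ (1 / q + 1) * √N * (1 + x ^ 3) :=
        le_mul_of_one_le_right (by positivity) (le_add_of_nonneg_right (by positivity))

end Localization

section ModerateDeviations

variable {φ : ℝ → ℝ} {m : ℝ} {A : Set ℝ}

/-- The statistical weights restricted to magnetizations in `A`, normalized so that they are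
asymptotic to the Gaussian density shape `exp(-w²/2)` near the minimizer `m` of `φ`. -/
noncomputable def normalizedWeight (φ : ℝ → ℝ) (m : ℝ) (A : Set ℝ) (n : ℕ) : ℤ → ℝ :=
  {k | latticeMag n k ∈ A}.indicator fun k => laplaceNormalizer φ m n * latticeWeight φ n k

lemma normalizedWeight_of_mem (φ : ℝ → ℝ) (m : ℝ) {n : ℕ} {k : ℤ} (hk : latticeMag n k ∈ A) :
    normalizedWeight φ m A n k = laplaceNormalizer φ m n * latticeWeight φ n k :=
  Set.indicator_of_mem (s := {k | latticeMag n k ∈ A}) hk _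

lemma normalizedWeight_nonneg (φ : ℝ → ℝ) (m : ℝ) (A : Set ℝ) (n : ℕ) (k : ℤ) :
    0 ≤ normalizedWeight φ m A n k :=
  Set.indicator_nonneg (fun k _ =>
    mul_nonneg (laplaceNormalizer_nonneg φ m n) (latticeWeight_nonneg φ n k)) k

lemma latticeMag_mem_of_normalizedWeight_ne_zero {n : ℕ} (hn : n ≠ 0) {k : ℤ}
    (hk : normalizedWeight φ m A n k ≠ 0) : latticeMag n k ∈ A ∩ Set.Icc (-1) 1 := by
  obtain ⟨hkA, hweight⟩ := Set.indicator_apply_ne_zero.mp hk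
  refine ⟨hkA, latticeMag_mem_Icc_of_intChoose_ne_zero hn fun hchoose => hweight ?_⟩
  simp [latticeWeight, hchoose]

lemma neg_sqrt_mul_add_eq_standardMag (b m : ℝ) {n : ℕ} (hn : n ≠ 0) (k : ℤ) :
    -(√(n * b) * (1 + m)) + 2 * √b / √n * k = standardMag b m n k := by
  have hn₀ : √(n : ℝ) ≠ 0 := by positivity
  have hsq : √(n : ℝ) ^ 2 = n := sq_sqrt n.cast_nonneg
  rw [standardMag, latticeMag, sqrt_mul n.cast_nonneg]
  nth_rw 4 5 [← hsq]
  field_simp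
  ring

lemma exists_abs_normalizedWeight_sub_le_near (hφ : ContDiffAt ℝ 3 φ m)
    (hm : m ∈ Set.Ioo (-1) 1) (hA : A ∈ 𝓝 m) (hcrit : deriv φ m = 0)
    (hconv : 0 < iteratedDeriv 2 φ m) (c : ℝ) :
    ∃ E, ∀ᶠ y in 𝓝 m, ∀ n ≠ 0, ∀ k, latticeMag n k = y →
      ∀ x, 0 ≤ x → x ≤ c * (n : ℝ) ^ (1 / 6 : ℝ) → x ≤ |standardMag (iteratedDeriv 2 φ m) m n k| →
        |normalizedWeight φ m A n k - exp (-standardMag (iteratedDeriv 2 φ m) m n k ^ 2 / 2)| ≤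
          E / √n * (1 + x ^ 3) * expMajorant x |standardMag (iteratedDeriv 2 φ m) m n k| := by
  obtain ⟨D, hD, hlog⟩ := exists_abs_log_add_le hφ hm hcrit hconv
  set b := iteratedDeriv 2 φ m
  have hsmall : ∀ᶠ y in 𝓝 m, 32 * D * (√b * |y - m|) ≤ 1 := by
    have hcont : ContinuousAt (fun y => 32 * D * (√b * |y - m|)) m := by fun_prop
    exact hcont.eventually_le_const (by simp)
  refine ⟨24 * D * exp (D * (1 + 4 * c ^ 3) + 3), ?_⟩
  filter_upwards [hlog, hsmall, hA, isOpen_Ioo.mem_nhds hm]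
    with y hylog hysmall hyA hy n hn k hk x hx hxc hxw
  specialize hylog n hn k hk
  subst hk
  have hn₁ : 1 ≤ √(n : ℝ) := one_le_sqrt.mpr (mod_cast Nat.one_le_iff_ne_zero.mpr hn)
  have hx₃ : x ^ 3 ≤ c ^ 3 * √n := by
    rw [← rpow_one_sixth_pow_three n.cast_nonneg, ← mul_pow]
    gcongr
  have hws : 32 * D * |standardMag b m n k| ≤ √n := by
    rw [abs_standardMag]
    nlinarith
  have hmain := abs_exp_add_sub_exp_le_mul_expMajorant hD hn₁ hx hxw hx₃ hws hylog
  rw [sq_abs, neg_div, neg_add_cancel_comm_assoc, ← neg_div, exp_log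
    (mul_pos (laplaceNormalizer_pos φ hm hn) (latticeWeight_pos φ hn hy))] at hmain
  rw [normalizedWeight_of_mem φ m hyA]
  convert hmain using 1
  ring

lemma exists_gap_of_strict_min (hφ : ContinuousOn φ (Set.Icc (-1) 1))
    (hmin : ∀ y ∈ closure A ∩ Set.Icc (-1) 1, y ≠ m → φ m < φ y) {δ : ℝ} (hδ : 0 < δ) :
    ∃ ε > 0, ∀ y ∈ A ∩ Set.Icc (-1) 1, δ ≤ |y - m| → φ m + ε ≤ φ y := by
  have hcompact : IsCompact (Set.Icc (-1) 1 ∩ (closure A ∩ {y | δ ≤ |y - m|})) :=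
    isCompact_Icc.inter_right
      (isClosed_closure.inter (isClosed_le continuous_const (by fun_prop)))
  obtain ⟨t, ht, hle⟩ := hcompact.exists_forall_le' (hφ.mono Set.inter_subset_left)
    fun y hy => hmin y ⟨hy.2.1, hy.1⟩ fun h => by
      have : δ ≤ |y - m| := hy.2.2
      simp only [h, sub_self, abs_zero] at this
      linarith
  exact ⟨t - φ m, sub_pos.mpr ht, fun y hy hyδ => by
    rw [add_sub_cancel]
    exact hle y ⟨hy.2, subset_closure hy.1, hyδ⟩⟩

lemma eventually_abs_normalizedWeight_sub_le_far (hφ : ContinuousOn φ (Set.Icc (-1) 1))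
    (hm : m ∈ Set.Ioo (-1) 1) (hmin : ∀ y ∈ closure A ∩ Set.Icc (-1) 1, y ≠ m → φ m < φ y)
    {b δ : ℝ} (hb : 0 < b) (hδ : 0 < δ) (c : ℝ) :
    ∀ᶠ n : ℕ in atTop, ∀ k, δ ≤ |latticeMag n k - m| →
      ∀ x, 0 ≤ x → x ≤ c * (n : ℝ) ^ (1 / 6 : ℝ) →
        |normalizedWeight φ m A n k - exp (-standardMag b m n k ^ 2 / 2)| ≤
          1 / √n * expMajorant x |standardMag b m n k| := by
  obtain ⟨ε, hε, hgap⟩ := exists_gap_of_strict_min hφ hmin hδ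
  have hβ : 0 < √b := sqrt_pos.mpr hb
  filter_upwards [eventually_exp_neg_sq_div_two_le_mul_expMajorant c (mul_pos hβ hδ),
    eventually_mul_exp_neg_le_mul_expMajorant c (mul_pos two_pos hβ).le hε,
    eventually_ne_atTop 0] with n hgauss hweight hn k hk x hx hxc
  have hpos : 0 ≤ 1 / √n * expMajorant x |standardMag b m n k| :=
    mul_nonneg (by positivity) (expMajorant_pos _ _).le
  refine abs_sub_le_of_nonneg_of_le (normalizedWeight_nonneg φ m A n k) ?_ (exp_pos _).le ?_
  · rcases eq_or_ne (normalizedWeight φ m A n k) 0 with hzero | hne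
    · rwa [hzero]
    obtain ⟨hkA, hIcc⟩ := latticeMag_mem_of_normalizedWeight_ne_zero hn hne
    have hle₂ : |latticeMag n k - m| ≤ 2 := by
      rw [abs_le]
      constructor <;> linarith [hIcc.1, hIcc.2, hm.1, hm.2]
    have hW : |standardMag b m n k| ≤ 2 * √b * √n :=
      calc _ = √n * √b * |latticeMag n k - m| := abs_standardMag b m n k
        _ ≤ √n * √b * 2 := by gcongr
        _ = _ := by ring
    calc _ ≤ 2 * √n * exp (-(n * (φ (latticeMag n k) - φ m))) := by
          rw [normalizedWeight_of_mem φ m hkA]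
          exact laplaceNormalizer_mul_latticeWeight_le φ m n k
      _ ≤ 2 * √n * exp (-(n * ε)) := by
          gcongr
          linarith [hgap _ ⟨hkA, hIcc⟩ hk]
      _ ≤ _ := hweight x _ hx hxc hW
  · rw [← sq_abs]
    refine hgauss x _ hxc ?_
    calc √b * δ * √n = √n * √b * δ := by ring
      _ ≤ √n * √b * |latticeMag n k - m| := by gcongr
      _ = _ := (abs_standardMag b m n k).symm

theorem exists_isNearGaussian_normalizedWeight (hφ : ContDiffAt ℝ 3 φ m)
    (hφ' : ContinuousOn φ (Set.Icc (-1) 1)) (hm : m ∈ Set.Ioo (-1) 1) (hA : A ∈ 𝓝 m)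
    (hmin : ∀ y ∈ closure A ∩ Set.Icc (-1) 1, y ≠ m → φ m < φ y)
    (hconv : 0 < iteratedDeriv 2 φ m) (c : ℝ) :
    ∃ E > 0, ∀ᶠ n : ℕ in atTop, ∀ x, 0 ≤ x → x ≤ c * (n : ℝ) ^ (1 / 6 : ℝ) →
      IsNearGaussian (-(√(n * iteratedDeriv 2 φ m) * (1 + m)))
        (2 * √(iteratedDeriv 2 φ m) / √n) x (E / √n * (1 + x ^ 3))
        (normalizedWeight φ m A n) := by
  have hcrit : deriv φ m = 0 := by
    refine IsLocalMin.deriv_eq_zero ?_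
    filter_upwards [hA, Icc_mem_nhds hm.1 hm.2] with y hyA hy
    rcases eq_or_ne y m with rfl | hne
    · exact le_rfl
    · exact (hmin y ⟨subset_closure hyA, hy⟩ hne).le
  obtain ⟨E, hnear⟩ := exists_abs_normalizedWeight_sub_le_near hφ hm hA hcrit hconv c
  obtain ⟨δ, hδ, hball⟩ := Metric.eventually_nhds_iff.mp hnear
  refine ⟨max E 1, by positivity, ?_⟩
  filter_upwards [eventually_abs_normalizedWeight_sub_le_far hφ' hm hmin hconv hδ c,
    eventually_ne_atTop 0] with n hfar hn x hx hxc k hxk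
  rw [neg_sqrt_mul_add_eq_standardMag _ m hn] at hxk ⊢
  have hmajorant := (expMajorant_pos x |standardMag (iteratedDeriv 2 φ m) m n k|).le
  rcases lt_or_ge |latticeMag n k - m| δ with hk | hk
  · refine (hball hk n hn k rfl x hx hxc hxk).trans ?_
    gcongr
    exact le_max_left E 1
  · refine (hfar k hk x hx hxc).trans ?_
    gcongr ?_ * _
    calc 1 / √(n : ℝ) ≤ max E 1 / √n := by
          gcongr
          exact le_max_right E 1
      _ ≤ max E 1 / √n * (1 + x ^ 3) :=
          le_mul_of_one_le_right (by positivity) (le_add_of_nonneg_right (by positivity))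

theorem exists_eventually_abs_tail_ratio_sub_one_le (hφ : ContDiffAt ℝ 3 φ m)
    (hφ' : ContinuousOn φ (Set.Icc (-1) 1)) (hm : m ∈ Set.Ioo (-1) 1) (hA : A ∈ 𝓝 m)
    (hmin : ∀ y ∈ closure A ∩ Set.Icc (-1) 1, y ≠ m → φ m < φ y)
    (hconv : 0 < iteratedDeriv 2 φ m) (c : ℝ) :
    ∃ C > 0, ∀ᶠ n : ℕ in atTop, ∀ x, 0 ≤ x → x ≤ c * (n : ℝ) ^ (1 / 6 : ℝ) →
      |(∑' k, {k | x < standardMag (iteratedDeriv 2 φ m) m n k}.indicator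
            (normalizedWeight φ m A n) k) / (∑' k, normalizedWeight φ m A n k)
          / (gaussianReal 0 1 (Set.Ioi x)).toReal - 1| ≤ C * (1 + x ^ 3) / √n := by
  obtain ⟨E, hE, hnear⟩ := exists_isNearGaussian_normalizedWeight hφ hφ' hm hA hmin hconv c
  set b := iteratedDeriv 2 φ m
  have : 0 < √b := sqrt_pos.mpr hconv
  refine ⟨8 * exp 2 * (2 * √b + E), by positivity, ?_⟩
  filter_upwards [hnear, eventually_one_add_mul_rpow_le c (θ := 1 / (2 * √b)) (by positivity),
    tendsto_sqrt_natCast_atTop.eventually_ge_atTop (2 * (exp 2 * (2 * √b + 2 * E))),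
    eventually_ne_atTop 0] with n hnear hstep hlarge hn x hx hxc
  have hn₀ : 0 < √(n : ℝ) := by positivity
  have hhx : 2 * √b / √n * (1 + x) ≤ 1 := by
    rw [div_mul_eq_mul_div, div_le_one₀ hn₀]
    calc 2 * √b * (1 + x) ≤ 2 * √b * (1 / (2 * √b) * √n) := by
          gcongr
          linarith
      _ = √n := by field_simp
  have hsmall : exp 2 * (2 * √b / √n + 2 * (E / √n)) ≤ 1 / 2 := by
    rw [show exp 2 * (2 * √b / √n + 2 * (E / √n)) = exp 2 * (2 * √b + 2 * E) / √n by ring,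
      div_le_iff₀ hn₀]
    linarith
  have hnear₀ := hnear 0 le_rfl (hx.trans hxc)
  rw [zero_pow three_ne_zero, add_zero, mul_one] at hnear₀
  have hratio := abs_tail_ratio_sub_one_le hx (by positivity) hhx (hnear x hx hxc) hnear₀ hsmall
  simp only [neg_sqrt_mul_add_eq_standardMag b m hn] at hratio
  refine hratio.trans_eq ?_
  ring

end ModerateDeviations

section CubicCurieWeiss

variable {n : ℕ}

lemma totalMag_eq_two_mul_card_sub (x : Fin n → Bool) :
    totalMag n x = 2 * ((Finset.univ.filter fun i => x i = true).card : ℝ) - n := by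
  have hspin : ∀ i, spin (x i) = 2 * (if x i = true then 1 else 0) - 1 := fun i => by
    unfold spin
    split_ifs <;> norm_num
  simp only [totalMag, hspin, Finset.sum_sub_distrib, ← Finset.mul_sum]
  simp

lemma sum_comp_magPP (n : ℕ) (F : ℝ → ℝ) :
    ∑ x, F (magPP n x) = ∑' k : ℤ, intChoose n k * F (latticeMag n k) := by
  have hsupport : ∀ k ∉ (Finset.range (n + 1)).map Nat.castEmbedding,
      (intChoose n k : ℝ) * F (latticeMag n k) = 0 := fun k hk => by
    by_contra hne
    obtain ⟨j, hj, rfl⟩ := exists_le_of_intChoose_ne_zero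
      (Nat.cast_ne_zero.mp (left_ne_zero_of_mul hne))
    exact hk (Finset.mem_map_of_mem _ (Finset.mem_range.mpr (Nat.lt_succ_of_le hj)))
  have hpowerset := Finset.sum_powerset_apply_card (fun k : ℕ => F (latticeMag n k))
    (x := (Finset.univ : Finset (Fin n)))
  simp only [Finset.powerset_univ, Finset.card_univ, Fintype.card_fin, nsmul_eq_mul] at hpowerset
  rw [tsum_eq_sum hsupport, Finset.sum_map]
  simp only [Nat.castEmbedding_apply, intChoose_natCast]
  rw [← hpowerset]
  refine Finset.sum_bij' (fun x _ => Finset.univ.filter fun i => x i = true)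
    (fun s _ i => decide (i ∈ s)) ?_ ?_ ?_ ?_ fun x _ => ?_
  on_goal 5 => simp [magPP, latticeMag, totalMag_eq_two_mul_card_sub]
  all_goals simp

lemma cubicProb_eq_inv_mul_sum_indicator (n : ℕ) (K J : ℝ) (s : Set (Fin n → Bool)) :
    cubicProb n K J s = (∑ x, cubicWeight n K J x)⁻¹ * ∑ x, s.indicator (cubicWeight n K J) x := by
  have hweight : ∀ x, 0 ≤ cubicWeight n K J x := fun x => (exp_pos _).le
  have hmass : ∀ x, (ENNReal.ofReal (cubicWeight n K J x) • Measure.dirac x) s =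
      ENNReal.ofReal (s.indicator (cubicWeight n K J) x) := fun x => by
    by_cases hx : x ∈ s <;> simp [hx]
  rw [cubicProb, cubicMeasure, Measure.smul_apply, Measure.finsetSum_apply, smul_eq_mul,
    ENNReal.toReal_mul, ENNReal.toReal_inv, Finset.sum_congr rfl fun x _ => hmass x,
    ← ENNReal.ofReal_sum_of_nonneg fun x _ => hweight x,
    ← ENNReal.ofReal_sum_of_nonneg fun x _ => Set.indicator_nonneg (fun y _ => hweight y) x,
    ENNReal.toReal_ofReal (Finset.sum_nonneg fun x _ => hweight x),
    ENNReal.toReal_ofReal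
      (Finset.sum_nonneg fun x _ => Set.indicator_nonneg (fun y _ => hweight y) x)]

lemma cubicProb_inter_div_mem_Icc (K J : ℝ) (s t : Set (Fin n → Bool)) :
    cubicProb n K J (s ∩ t) / cubicProb n K J t ∈ Set.Icc 0 1 := by
  have hweight : ∀ x, 0 ≤ cubicWeight n K J x := fun x => (exp_pos _).le
  have hnonneg : ∀ u, 0 ≤ cubicProb n K J u := fun u => ENNReal.toReal_nonneg
  refine ⟨div_nonneg (hnonneg _) (hnonneg _), div_le_one_of_le₀ ?_ (hnonneg _)⟩
  rw [cubicProb_eq_inv_mul_sum_indicator, cubicProb_eq_inv_mul_sum_indicator]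
  refine mul_le_mul_of_nonneg_left (Finset.sum_le_sum fun x _ => ?_)
    (inv_nonneg.mpr (Finset.sum_nonneg fun x _ => hweight x))
  exact Set.indicator_le_indicator_of_subset Set.inter_subset_right hweight x

lemma binEnt_sub_phiKJ (K J y : ℝ) : binEnt y - phiKJ K J y = K / 3 * y ^ 3 + J / 2 * y ^ 2 := by
  rw [phiKJ]
  ring

lemma sum_indicator_cubicWeight (n : ℕ) (K J : ℝ) (B : Set ℝ) :
    ∑ x, {x | magPP n x ∈ B}.indicator (cubicWeight n K J) x =
      ∑' k, {k | latticeMag n k ∈ B}.indicator (latticeWeight (phiKJ K J) n) k := by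
  have hsum := sum_comp_magPP n (B.indicator fun y => exp (n * (K / 3 * y ^ 3 + J / 2 * y ^ 2)))
  refine hsum.trans (tsum_congr fun k => ?_)
  by_cases hk : latticeMag n k ∈ B <;> simp [hk, latticeWeight, binEnt_sub_phiKJ]

lemma totalMag_sub_div_sqrt (m : ℝ) {b : ℝ} (hb : 0 < b) (hn : n ≠ 0) (x : Fin n → Bool) :
    (totalMag n x - n * m) / √(n / b) = √(n * b) * (magPP n x - m) := by
  have hsq : √(n : ℝ) ^ 2 = n := sq_sqrt n.cast_nonneg
  have hn₀ : √(n : ℝ) ≠ 0 := by positivity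
  have hb₀ : √b ≠ 0 := by positivity
  rw [sqrt_div n.cast_nonneg, sqrt_mul n.cast_nonneg, magPP]
  nth_rw 1 4 [← hsq]
  field_simp

lemma cubicProb_inter_div_eq_tsum_div_tsum (K J : ℝ) {m b : ℝ} (hm : m ∈ Set.Ioo (-1) 1)
    (hb : 0 < b) (A : Set ℝ) (hn : n ≠ 0) (x : ℝ) :
    cubicProb n K J ({y | x < (totalMag n y - n * m) / √(n / b)} ∩ {y | magPP n y ∈ A}) /
        cubicProb n K J {y | magPP n y ∈ A} =
      (∑' k, {k | x < standardMag b m n k}.indicator (normalizedWeight (phiKJ K J) m A n) k) /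
        ∑' k, normalizedWeight (phiKJ K J) m A n k := by
  have hevent : {y | x < (totalMag n y - n * m) / √(n / b)} ∩ {y | magPP n y ∈ A} =
      {y | magPP n y ∈ {z | x < √(n * b) * (z - m)} ∩ A} := by
    ext y
    rw [Set.mem_inter_iff, Set.mem_ofPred_eq, totalMag_sub_div_sqrt m hb hn]
    rfl
  have hpartition : (∑ x, cubicWeight n K J x)⁻¹ ≠ 0 :=
    inv_ne_zero (Finset.sum_pos (fun x _ => exp_pos _) Finset.univ_nonempty).ne'
  rw [hevent, cubicProb_eq_inv_mul_sum_indicator, cubicProb_eq_inv_mul_sum_indicator,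
    mul_div_mul_left _ _ hpartition, sum_indicator_cubicWeight, sum_indicator_cubicWeight,
    ← mul_div_mul_left _ _ (laplaceNormalizer_pos (phiKJ K J) hm hn).ne', ← tsum_mul_left,
    ← tsum_mul_left]
  congr 1 <;> refine tsum_congr fun k => ?_
  · by_cases hkA : latticeMag n k ∈ A <;> by_cases hkx : x < standardMag b m n k <;>
      simp_all [normalizedWeight, standardMag]
  · by_cases hkA : latticeMag n k ∈ A <;> simp [hkA, normalizedWeight]

lemma continuous_phiKJ (K J : ℝ) : Continuous (phiKJ K J) := by
  have hbinEnt : Continuous binEnt := by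
    rw [funext binEnt_eq_neg_binEntropy]
    fun_prop
  unfold phiKJ
  fun_prop

lemma contDiffAt_phiKJ (K J : ℝ) {m : ℝ} (hm : m ∈ Set.Ioo (-1) 1) {r : WithTop ℕ∞} :
    ContDiffAt ℝ r (phiKJ K J) m := by
  have hminus : (1 - m) / 2 ≠ 0 := by linarith [hm.2]
  have hplus : (1 + m) / 2 ≠ 0 := by linarith [hm.1]
  unfold phiKJ binEnt
  fun_prop (disch := assumption)

lemma lt_of_two_minimizers {f : ℝ → ℝ} {s A : Set ℝ} {m : Fin 2 → ℝ} (hmem : ∀ i, m i ∈ s)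
    (hmin : ∀ i, ∀ y ∈ s, f (m i) ≤ f y)
    (huniq : ∀ y ∈ s, f y = f (m 0) → y = m 0 ∨ y = m 1) {i : Fin 2}
    (hA : m (1 - i) ∉ A) : ∀ y ∈ A ∩ s, y ≠ m i → f (m i) < f y := by
  intro y hy hne
  refine (hmin i y hy.2).lt_of_ne fun heq => ?_
  have heq₀ : f y = f (m 0) :=
    heq.symm.trans (le_antisymm (hmin i _ (hmem 0)) (hmin 0 _ (hmem i)))
  have hother : y ≠ m (1 - i) := fun h => hA (h ▸ hy.1)
  fin_cases i <;> rcases huniq y hy.2 heq₀ with rfl | rfl <;> simp_all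

theorem stmt_18_general (K J : ℝ) {m : ℝ} (hm : m ∈ Set.Ioo (-1) 1) {A : Set ℝ} (hA : A ∈ 𝓝 m)
    (hmin : ∀ y ∈ closure A ∩ Set.Icc (-1) 1, y ≠ m → phiKJ K J m < phiKJ K J y)
    (hconv : 0 < iteratedDeriv 2 (phiKJ K J) m) (c : ℝ) :
    ∃ C > 0, ∀ n : ℕ, 1 ≤ n → ∀ x, 0 ≤ x → x ≤ c * (n : ℝ) ^ (1 / 6 : ℝ) →
      |(cubicProb n K J
            ({y | x < (totalMag n y - n * m) / √(n / iteratedDeriv 2 (phiKJ K J) m)}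
              ∩ {y | magPP n y ∈ A}) /
          cubicProb n K J {y | magPP n y ∈ A}) /
          (gaussianReal 0 1 (Set.Ioi x)).toReal - 1| ≤ C * (1 + x ^ 3) / √n := by
  obtain ⟨C₁, hC₁, hlarge⟩ := exists_eventually_abs_tail_ratio_sub_one_le
    (contDiffAt_phiKJ K J hm) (continuous_phiKJ K J).continuousOn hm hA hmin hconv c
  obtain ⟨N, hN⟩ := eventually_atTop.mp hlarge
  obtain ⟨C₂, hsmall⟩ := exists_forall_abs_div_gaussianReal_Ioi_sub_one_le c N
  refine ⟨max C₁ C₂, lt_max_of_lt_left hC₁, fun n hn x hx hxc => ?_⟩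
  have hn₀ := Nat.one_le_iff_ne_zero.mp hn
  rcases le_total N n with hNn | hnN
  · rw [cubicProb_inter_div_eq_tsum_div_tsum K J hm hconv A hn₀]
    refine (hN n hNn x hx hxc).trans ?_
    gcongr
    exact le_max_left C₁ C₂
  · refine (hsmall n hn₀ hnN x hx hxc _ (cubicProb_inter_div_mem_Icc K J _ _)).trans ?_
    gcongr
    exact le_max_right C₁ C₂

end CubicCurieWeiss

/-- Conditional Cramér-type moderate deviations on the coexistence curve: when
`φ_{K,J}` has exactly two nondegenerate minimizers `m 0 ≠ m 1` in `(−1,1)` and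
`A i` is an open neighborhood of `m i` in `(−1,1)` whose closure misses the other
phase, then for each `i` there are `c_i, C_i > 0` such that for all `n ≥ 1` and
`0 ≤ x ≤ c_i n^{1/6}`,
`|P_{n,K,J}(W_n^{(i)} > x | m_n ∈ A_i)/P(Z > x) − 1| ≤ C_i (1+x³)/√n`. -/
theorem stmt_18 (K J : ℝ) (hK : 0 < K) (m : Fin 2 → ℝ)
    (hne : m 0 ≠ m 1)
    (hmem : ∀ i, m i ∈ Set.Ioo (-1 : ℝ) 1)
    (hmin : ∀ i, ∀ y ∈ Set.Icc (-1 : ℝ) 1, phiKJ K J (m i) ≤ phiKJ K J y)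
    (huniq : ∀ y ∈ Set.Icc (-1 : ℝ) 1,
      phiKJ K J y = phiKJ K J (m 0) → (y = m 0 ∨ y = m 1))
    (hconv : ∀ i, 0 < iteratedDeriv 2 (phiKJ K J) (m i))
    (A : Fin 2 → Set ℝ)
    (hAopen : ∀ i, IsOpen (A i)) (hAmem : ∀ i, m i ∈ A i)
    (hAsub : ∀ i, A i ⊆ Set.Ioo (-1 : ℝ) 1)
    (hAcl : ∀ i, m (1 - i) ∉ closure (A i)) :
    ∀ i : Fin 2, ∃ c C : ℝ, 0 < c ∧ 0 < C ∧ ∀ n : ℕ, 1 ≤ n → ∀ x : ℝ,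
      0 ≤ x → x ≤ c * (n : ℝ) ^ ((1 : ℝ)/6) →
      |(cubicProb n K J
            ({y | x < (totalMag n y - n * m i) /
                Real.sqrt (n / iteratedDeriv 2 (phiKJ K J) (m i))}
              ∩ {y | magPP n y ∈ A i}) /
          cubicProb n K J {y | magPP n y ∈ A i}) /
          (ProbabilityTheory.gaussianReal 0 1 (Set.Ioi x)).toReal
        - 1| ≤ C * (1 + x ^ 3) / Real.sqrt n := by
  intro i
  have hlt := lt_of_two_minimizers (A := closure (A i))
    (fun i => Set.Ioo_subset_Icc_self (hmem i)) hmin huniq (hAcl i)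
  obtain ⟨C, hC, hbound⟩ := stmt_18_general K J (hmem i)
    ((hAopen i).mem_nhds (hAmem i)) hlt (hconv i) 1
  exact ⟨1, C, one_pos, hC, hbound⟩
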